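/- Let T > 0 and let b, b̃, σ, σ̃ belong to the class M with σ(x) > 0 and σ̃(x) > 0 for all x. For k = 1, 2, let u_k be a classical solution of the parabolic equation associated with (b, σ, f_k) and let ũ_k be a classical solution of the parabolic equation associated with (b̃, σ̃, f_k), where f_k(x) = x^k. Suppose there exist ε ∈ (0, T) and a nonempty open set ω ⊂ ℝ such that for all t ∈ (0, ε) and all x ∈ ω one has u_1(t,x) = ũ_1(t,x) and u_2(t,x) − u_1(t,x)² = ũ_2(t,x) − ũ_1(t,x)² (equality of expectations and of variances). Then b(x) = b̃(x) and σ(x) = σ̃(x) for all x ∈ ℝ. -/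

import Mathlib

open Set Filter

/-- A function `ψ : ℝ → ℝ` is piecewise analytic if there exist `δ > 0`, a strictly
increasing sequence `(κ j)_{j ∈ ℤ}` tending to `-∞` at `-∞` and `+∞` at `+∞` with
`κ (j+1) - κ j > δ`, and functions `φ j` analytic on `[κ j, κ (j+1)]`, such that
`ψ = φ j` on `[κ j, κ (j+1))`. -/
def PiecewiseAnalytic (ψ : ℝ → ℝ) : Prop :=
  ∃ (δ : ℝ) (κ : ℤ → ℝ) (φ : ℤ → ℝ → ℝ),
    0 < δ ∧ StrictMono κ ∧
    Tendsto κ atBot atBot ∧ Tendsto κ atTop atTop ∧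
    (∀ j : ℤ, δ < κ (j + 1) - κ j) ∧
    (∀ j : ℤ, AnalyticOn ℝ (φ j) (Icc (κ j) (κ (j + 1)))) ∧
    (∀ j : ℤ, ∀ x ∈ Ico (κ j) (κ (j + 1)), ψ x = φ j x)

/-- The class `M` of Lipschitz-continuous, piecewise analytic functions on `ℝ`. -/
def ClassM (ψ : ℝ → ℝ) : Prop :=
  (∃ K, LipschitzWith K ψ) ∧ PiecewiseAnalytic ψ

/-- `u : [0,T) × ℝ → ℝ` is a classical solution of
`∂ₜ u = (1/2) σ(x)² ∂ₓₓ u + b(x) ∂ₓ u`, `u(0, ·) = f`: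
`u`, `∂ₜ u`, `∂ₓ u`, `∂ₓₓ u` exist and are continuous on `[0,T) × ℝ`, the PDE holds
there, and the initial condition holds. -/
def IsClassicalSolution (T : ℝ) (b σ f : ℝ → ℝ) (u : ℝ → ℝ → ℝ) : Prop :=
  ContinuousOn (fun p : ℝ × ℝ => u p.1 p.2) (Ico 0 T ×ˢ univ) ∧
  (∀ t ∈ Ico 0 T, ∀ x : ℝ, DifferentiableAt ℝ (fun s => u s x) t) ∧
  (∀ t ∈ Ico 0 T, ∀ x : ℝ, DifferentiableAt ℝ (fun y => u t y) x) ∧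
  (∀ t ∈ Ico 0 T, ∀ x : ℝ, DifferentiableAt ℝ (deriv (fun y => u t y)) x) ∧
  ContinuousOn (fun p : ℝ × ℝ => deriv (fun s => u s p.2) p.1) (Ico 0 T ×ˢ univ) ∧
  ContinuousOn (fun p : ℝ × ℝ => deriv (fun y => u p.1 y) p.2) (Ico 0 T ×ˢ univ) ∧
  ContinuousOn (fun p : ℝ × ℝ => deriv (deriv (fun y => u p.1 y)) p.2) (Ico 0 T ×ˢ univ) ∧
  (∀ t ∈ Ico 0 T, ∀ x : ℝ,
    deriv (fun s => u s x) t =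
      (1 / 2) * (σ x) ^ 2 * deriv (deriv (fun y => u t y)) x
        + b x * deriv (fun y => u t y) x) ∧
  (∀ x : ℝ, u 0 x = f x)

open MeasureTheory Asymptotics
open scoped Topology

/-!
Let `u` and `v` solve the two equations with the same initial value `f`. The difference `w = u - v`
has zero initial value and zero Cauchy data on a vertical line `x = x₁` through the observed set.
As long as the coefficients agree to the right of `x₁`, `w` solves a homogeneous equation there; its
Laplace transform over a finite time interval solves a second order equation in `x`, so it grows at
most like `exp (c * √l)` by Grönwall's inequality, and Phragmén's theorem gives `w = 0`. The zero
Cauchy data are thus carried to the end `x₀` of the interval of agreement.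

To the right of `x₀` the differences of the coefficients are `(x - x₀) ^ n • (A, B)` with `A`, `B`
analytic and not both zero at `x₀`, unless they vanish identically. If `A * f'' + B * f'` were
nonzero at `x₀`, the source term of the equation for `w` would have a strict sign near `(0, x₀)`,
and the boundary point lemma would give `∂ₓw ≠ 0` on `x = x₀`. Two initial values `f` whose
derivatives have a nonvanishing Wronskian then force `A = B = 0` at `x₀`, so agreement never stops
on the right; reflection `x ↦ -x` gives the left.
-/

/-- The Laplace transform of `h` truncated to `[0, τ]`, normalised by the factor `exp (l * τ)` so
that it is bounded in `l ≥ 0` only if `h` vanishes. -/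
noncomputable def truncLaplace (τ l : ℝ) (h : ℝ → ℝ) : ℝ :=
  ∫ t in (0 : ℝ)..τ, Real.exp (l * (τ - t)) * h t

lemma hasSum_exp_sub_one (y : ℝ) :
    HasSum (fun k : ℕ => y ^ (k + 1) / ((k + 1).factorial : ℝ)) (Real.exp y - 1) := by
  have h := NormedSpace.expSeries_div_hasSum_exp (𝔸 := ℝ) y
  rw [← Real.exp_eq_exp_ℝ] at h
  simpa using (hasSum_nat_add_iff' 1).2 h

section Phragmen

variable {τ : ℝ} {h : ℝ → ℝ}

lemma aestronglyMeasurable_mul_restrict_uIoc {g : ℝ → ℝ} (hτ : 0 ≤ τ) (hg : Continuous g)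
    (hh : ContinuousOn h (Icc 0 τ)) :
    AEStronglyMeasurable (fun t => g t * h t) (volume.restrict (uIoc 0 τ)) := by
  rw [uIoc_of_le hτ]
  exact ((hg.continuousOn.mul hh).mono Ioc_subset_Icc_self).aestronglyMeasurable measurableSet_Ioc

lemma neg_exp_pow_eq (l q t τ : ℝ) (m : ℕ) :
    (-Real.exp (l * (q - t))) ^ m =
      (-1) ^ m * Real.exp (-(m * l * (τ - q))) * Real.exp (m * l * (τ - t)) := by
  rw [neg_pow, ← Real.exp_nat_mul, mul_assoc, ← Real.exp_add]
  ring_nf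

-- Expanding the outer exponential of `exp (-exp (l * (q - t)))` only involves transforms at
-- multiples of `l`, and as `l → ∞` the kernel `exp (-exp (l * (q - t))) - 1` tends to `-1` for
-- `t < q` and to `0` for `t > q`.
lemma hasSum_truncLaplace (hτ : 0 ≤ τ) (hh : ContinuousOn h (Icc 0 τ)) (q : ℝ) {l : ℝ}
    (hl : 0 ≤ l) :
    HasSum
      (fun k : ℕ => (-1) ^ (k + 1) * Real.exp (-((k + 1 : ℕ) * l * (τ - q))) /
        ((k + 1).factorial : ℝ) * truncLaplace τ ((k + 1 : ℕ) * l) h)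
      (∫ t in (0 : ℝ)..τ, (Real.exp (-Real.exp (l * (q - t))) - 1) * h t) := by
  obtain ⟨C, hC⟩ := isCompact_Icc.exists_bound_of_continuousOn hh
  have hterm (k : ℕ) : (-1) ^ (k + 1) * Real.exp (-((k + 1 : ℕ) * l * (τ - q))) /
        ((k + 1).factorial : ℝ) * truncLaplace τ ((k + 1 : ℕ) * l) h =
      ∫ t in (0 : ℝ)..τ, (-Real.exp (l * (q - t))) ^ (k + 1) / ((k + 1).factorial : ℝ) * h t := by
    simp only [truncLaplace, ← intervalIntegral.integral_const_mul, neg_exp_pow_eq l q _ τ]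
    congr 1 with t
    ring
  simp only [hterm]
  refine intervalIntegral.hasSum_integral_of_dominated_convergence
    (fun k _ => Real.exp (l * q) ^ (k + 1) / ((k + 1).factorial : ℝ) * C)
    (fun k => aestronglyMeasurable_mul_restrict_uIoc hτ (by fun_prop) hh)
    (fun k => .of_forall fun t ht => ?_)
    (.of_forall fun t _ => ((hasSum_exp_sub_one _).mul_right C).summable)
    intervalIntegrable_const (.of_forall fun t _ => (hasSum_exp_sub_one _).mul_right _)
  rw [uIoc_of_le hτ] at ht
  rw [norm_mul, norm_div, norm_pow, norm_neg, Real.norm_eq_abs, Real.abs_exp,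
    RCLike.norm_natCast]
  gcongr
  · linarith [ht.1]
  · exact hC t ⟨ht.1.le, ht.2⟩

lemma tendsto_exp_neg_exp_mul_sub_one {s : ℝ} (hs : s ≠ 0) :
    Tendsto (fun l : ℝ => Real.exp (-Real.exp (l * s)) - 1) atTop
      (𝓝 (if 0 < s then -1 else 0)) := by
  rcases hs.lt_or_gt with hs | hs
  · have hexp := Real.tendsto_exp_atBot.comp (tendsto_id.atTop_mul_const_of_neg hs)
    simpa [hs.not_gt] using ((Real.continuous_exp.tendsto _).comp hexp.neg).sub_const 1
  · have hexp := Real.tendsto_exp_atTop.comp (tendsto_id.atTop_mul_const hs)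
    simpa [hs] using
      (Real.tendsto_exp_atBot.comp (tendsto_neg_atTop_atBot.comp hexp)).sub_const 1

lemma tendsto_integral_exp_neg_exp_sub_one_mul (hh : ContinuousOn h (Icc 0 τ)) {q : ℝ}
    (hq : q ∈ Icc 0 τ) :
    Tendsto (fun l : ℝ => ∫ t in (0 : ℝ)..τ, (Real.exp (-Real.exp (l * (q - t))) - 1) * h t) atTop
      (𝓝 (∫ t in (0 : ℝ)..q, -h t)) := by
  have hτ : 0 ≤ τ := hq.1.trans hq.2
  rw [← intervalIntegral.integral_indicator hq]
  refine intervalIntegral.tendsto_integral_filter_of_dominated_convergence (fun t => ‖h t‖)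
    (.of_forall fun l => aestronglyMeasurable_mul_restrict_uIoc hτ (by fun_prop) hh)
    (.of_forall fun l => .of_forall fun t _ => ?_)
    (hh.intervalIntegrable_of_Icc hτ).norm ?_
  · rw [norm_mul]
    refine mul_le_of_le_one_left (norm_nonneg _) ?_
    have hle : Real.exp (-Real.exp (l * (q - t))) ≤ 1 :=
      Real.exp_le_one_iff.2 (by linarith [Real.exp_pos (l * (q - t))])
    rw [Real.norm_eq_abs, abs_le]
    constructor <;> linarith [Real.exp_pos (-Real.exp (l * (q - t)))]
  · filter_upwards [Measure.ae_ne volume q] with t htq _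
    convert (tendsto_exp_neg_exp_mul_sub_one (sub_ne_zero.2 htq.symm)).mul_const (h t) using 2
    rcases htq.lt_or_gt with h' | h' <;> simp [h', h'.le, h'.not_ge, h'.not_gt]

lemma norm_integral_exp_neg_exp_sub_one_mul_le (hτ : 0 ≤ τ) (hh : ContinuousOn h (Icc 0 τ))
    {M r l : ℝ} (hl : 0 ≤ l)
    (hM : ∀ m : ℝ, l ≤ m → ‖truncLaplace τ m h‖ ≤ M * Real.exp (r * m)) (q : ℝ) :
    ‖∫ t in (0 : ℝ)..τ, (Real.exp (-Real.exp (l * (q - t))) - 1) * h t‖ ≤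
      M * (Real.exp (Real.exp (l * (r - (τ - q)))) - 1) := by
  rw [← (hasSum_truncLaplace hτ hh q hl).tsum_eq]
  refine tsum_of_norm_bounded ((hasSum_exp_sub_one _).mul_left M) fun k => ?_
  set m : ℝ := (k + 1 : ℕ) * l with hm
  have hlm : l ≤ m := le_mul_of_one_le_left hl (by simp)
  calc ‖(-1) ^ (k + 1) * Real.exp (-(m * (τ - q))) / ((k + 1).factorial : ℝ) * truncLaplace τ m h‖
      = Real.exp (-(m * (τ - q))) / ((k + 1).factorial : ℝ) * ‖truncLaplace τ m h‖ := by
        rw [norm_mul, norm_div, norm_mul, norm_pow, norm_neg, norm_one, one_pow, one_mul,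
          RCLike.norm_natCast, Real.norm_eq_abs, Real.abs_exp]
    _ ≤ Real.exp (-(m * (τ - q))) / ((k + 1).factorial : ℝ) * (M * Real.exp (r * m)) := by
        gcongr
        exact hM m hlm
    _ = M * (Real.exp (l * (r - (τ - q))) ^ (k + 1) / ((k + 1).factorial : ℝ)) := by
        have hexp : Real.exp (l * (r - (τ - q))) ^ (k + 1) =
            Real.exp (-(m * (τ - q))) * Real.exp (r * m) := by
          rw [← Real.exp_nat_mul, ← Real.exp_add, hm]
          ring_nf
        rw [hexp]
        ring

lemma integral_eq_zero_of_truncLaplace_isBigO (hh : ContinuousOn h (Icc 0 τ))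
    (hO : ∀ r : ℝ, 0 < r →
      (fun l => truncLaplace τ l h) =O[atTop] fun l => Real.exp (r * l))
    {q : ℝ} (hq : q ∈ Ico 0 τ) : ∫ t in (0 : ℝ)..q, h t = 0 := by
  have hτ : 0 ≤ τ := hq.1.trans hq.2.le
  have hr : 0 < (τ - q) / 2 := half_pos (sub_pos.2 hq.2)
  obtain ⟨M, hM⟩ := (hO _ hr).bound
  obtain ⟨L, hL⟩ := eventually_atTop.1 hM
  have hbound : ∀ᶠ l : ℝ in atTop,
      ‖∫ t in (0 : ℝ)..τ, (Real.exp (-Real.exp (l * (q - t))) - 1) * h t‖ ≤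
        M * (Real.exp (Real.exp (l * ((τ - q) / 2 - (τ - q)))) - 1) := by
    filter_upwards [eventually_ge_atTop L, eventually_ge_atTop 0] with l hLl hl
    refine norm_integral_exp_neg_exp_sub_one_mul_le hτ hh hl (fun m hm => ?_) q
    simpa using hL m (hLl.trans hm)
  have hvanish : Tendsto
      (fun l : ℝ => M * (Real.exp (Real.exp (l * ((τ - q) / 2 - (τ - q)))) - 1)) atTop (𝓝 0) := by
    have hexp := Real.tendsto_exp_atBot.comp
      (tendsto_id.atTop_mul_const_of_neg (r := (τ - q) / 2 - (τ - q)) (by linarith))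
    simpa using (((Real.continuous_exp.tendsto 0).comp hexp).sub_const 1).const_mul M
  have hlim := tendsto_nhds_unique (tendsto_integral_exp_neg_exp_sub_one_mul hh ⟨hq.1, hq.2.le⟩)
    (squeeze_zero_norm' hbound hvanish)
  simpa using hlim

lemma eqOn_zero_of_integral_eq_zero (hτ : 0 < τ) (hh : ContinuousOn h (Icc 0 τ))
    (hint : ∀ q ∈ Ioo 0 τ, ∫ t in (0 : ℝ)..q, h t = 0) : EqOn h 0 (Icc 0 τ) := by
  have hIoo : EqOn h 0 (Ioo 0 τ) := fun q hq => by
    have hderiv : HasDerivAt (fun u => ∫ t in (0 : ℝ)..u, h t) (h q) q :=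
      intervalIntegral.integral_hasDerivAt_right
        ((hh.mono (Icc_subset_Icc_right hq.2.le)).intervalIntegrable_of_Icc hq.1.le)
        ((hh.mono Ioo_subset_Icc_self).stronglyMeasurableAtFilter isOpen_Ioo q hq)
        (hh.continuousAt (Icc_mem_nhds hq.1 hq.2))
    refine hderiv.unique ((hasDerivAt_const q (0 : ℝ)).congr_of_eventuallyEq ?_)
    filter_upwards [Ioo_mem_nhds hq.1 hq.2] with u hu using hint u hu
  exact hIoo.of_subset_closure hh continuousOn_const Ioo_subset_Icc_self
    (closure_Ioo hτ.ne).ge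

/-- A form of Phragmén's uniqueness theorem for the Laplace transform. -/
theorem eqOn_zero_of_truncLaplace_isBigO (hτ : 0 < τ) (hh : ContinuousOn h (Icc 0 τ))
    (hO : ∀ r : ℝ, 0 < r →
      (fun l => truncLaplace τ l h) =O[atTop] fun l => Real.exp (r * l)) :
    EqOn h 0 (Icc 0 τ) :=
  eqOn_zero_of_integral_eq_zero hτ hh fun _ hq =>
    integral_eq_zero_of_truncLaplace_isBigO hh hO ⟨hq.1.le, hq.2⟩

end Phragmen

/-- `w` is continuous on `J × ℝ` together with its derivatives `wt = ∂ₜw`, `wx = ∂ₓw` and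
`wxx = ∂ₓₓw`. Time derivatives are taken within `J`, so that `J` may contain its end points; the
derivatives are data, so that linear operations act on them directly. -/
structure HasParabolicDerivs (J : Set ℝ) (w wt wx wxx : ℝ → ℝ → ℝ) : Prop where
  continuousOn : ContinuousOn (fun p : ℝ × ℝ => w p.1 p.2) (J ×ˢ univ)
  continuousOn_t : ContinuousOn (fun p : ℝ × ℝ => wt p.1 p.2) (J ×ˢ univ)
  continuousOn_x : ContinuousOn (fun p : ℝ × ℝ => wx p.1 p.2) (J ×ˢ univ)
  continuousOn_xx : ContinuousOn (fun p : ℝ × ℝ => wxx p.1 p.2) (J ×ˢ univ)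
  hasDerivWithinAt_t : ∀ t ∈ J, ∀ x, HasDerivWithinAt (fun s => w s x) (wt t x) J t
  hasDerivAt_x : ∀ t ∈ J, ∀ x, HasDerivAt (w t) (wx t x) x
  hasDerivAt_xx : ∀ t ∈ J, ∀ x, HasDerivAt (wx t) (wxx t x) x

namespace HasParabolicDerivs

variable {J : Set ℝ} {w wt wx wxx v vt vx vxx : ℝ → ℝ → ℝ}

lemma mono (hw : HasParabolicDerivs J w wt wx wxx) {I : Set ℝ} (hIJ : I ⊆ J) :
    HasParabolicDerivs I w wt wx wxx where
  continuousOn := hw.continuousOn.mono (prod_mono_left hIJ)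
  continuousOn_t := hw.continuousOn_t.mono (prod_mono_left hIJ)
  continuousOn_x := hw.continuousOn_x.mono (prod_mono_left hIJ)
  continuousOn_xx := hw.continuousOn_xx.mono (prod_mono_left hIJ)
  hasDerivWithinAt_t t ht x := (hw.hasDerivWithinAt_t t (hIJ ht) x).mono hIJ
  hasDerivAt_x t ht := hw.hasDerivAt_x t (hIJ ht)
  hasDerivAt_xx t ht := hw.hasDerivAt_xx t (hIJ ht)

lemma sub (hw : HasParabolicDerivs J w wt wx wxx) (hv : HasParabolicDerivs J v vt vx vxx) :
    HasParabolicDerivs J (fun t x => w t x - v t x) (fun t x => wt t x - vt t x)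
      (fun t x => wx t x - vx t x) (fun t x => wxx t x - vxx t x) where
  continuousOn := hw.continuousOn.sub hv.continuousOn
  continuousOn_t := hw.continuousOn_t.sub hv.continuousOn_t
  continuousOn_x := hw.continuousOn_x.sub hv.continuousOn_x
  continuousOn_xx := hw.continuousOn_xx.sub hv.continuousOn_xx
  hasDerivWithinAt_t t ht x := (hw.hasDerivWithinAt_t t ht x).sub (hv.hasDerivWithinAt_t t ht x)
  hasDerivAt_x t ht x := (hw.hasDerivAt_x t ht x).sub (hv.hasDerivAt_x t ht x)
  hasDerivAt_xx t ht x := (hw.hasDerivAt_xx t ht x).sub (hv.hasDerivAt_xx t ht x)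

lemma const_mul (hw : HasParabolicDerivs J w wt wx wxx) (c : ℝ) :
    HasParabolicDerivs J (fun t x => c * w t x) (fun t x => c * wt t x)
      (fun t x => c * wx t x) (fun t x => c * wxx t x) where
  continuousOn := continuousOn_const.mul hw.continuousOn
  continuousOn_t := continuousOn_const.mul hw.continuousOn_t
  continuousOn_x := continuousOn_const.mul hw.continuousOn_x
  continuousOn_xx := continuousOn_const.mul hw.continuousOn_xx
  hasDerivWithinAt_t t ht x := (hw.hasDerivWithinAt_t t ht x).const_mul c
  hasDerivAt_x t ht x := (hw.hasDerivAt_x t ht x).const_mul c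
  hasDerivAt_xx t ht x := (hw.hasDerivAt_xx t ht x).const_mul c

end HasParabolicDerivs

lemma continuousOn_slice_left {J : Set ℝ} {p : ℝ → ℝ → ℝ}
    (hp : ContinuousOn (fun z : ℝ × ℝ => p z.1 z.2) (J ×ˢ univ)) (x : ℝ) :
    ContinuousOn (fun t => p t x) J :=
  hp.comp (f := fun t => (t, x)) (by fun_prop) fun _ ht => ⟨ht, trivial⟩

section TruncLaplace

variable {τ l : ℝ}

lemma intervalIntegrable_exp_mul (hτ : 0 ≤ τ) {h : ℝ → ℝ} (hh : ContinuousOn h (Icc 0 τ)) :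
    IntervalIntegrable (fun t => Real.exp (l * (τ - t)) * h t) volume 0 τ :=
  ContinuousOn.intervalIntegrable_of_Icc hτ (by fun_prop)

lemma truncLaplace_linear (hτ : 0 ≤ τ) {g h : ℝ → ℝ} (hg : ContinuousOn g (Icc 0 τ))
    (hh : ContinuousOn h (Icc 0 τ)) (α β : ℝ) :
    truncLaplace τ l (fun t => α * g t + β * h t) =
      α * truncLaplace τ l g + β * truncLaplace τ l h := by
  simp only [truncLaplace]
  rw [← intervalIntegral.integral_const_mul, ← intervalIntegral.integral_const_mul,
    ← intervalIntegral.integral_add ((intervalIntegrable_exp_mul hτ hg).const_mul α)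
      ((intervalIntegrable_exp_mul hτ hh).const_mul β)]
  congr 1 with t
  ring

lemma truncLaplace_congr (hτ : 0 ≤ τ) {g h : ℝ → ℝ} (hgh : EqOn g h (Icc 0 τ)) :
    truncLaplace τ l g = truncLaplace τ l h :=
  intervalIntegral.integral_congr fun t ht => by
    rw [uIcc_of_le hτ] at ht
    simp only [hgh ht]

lemma truncLaplace_zero : truncLaplace τ l 0 = 0 := by
  simp [truncLaplace]

lemma truncLaplace_deriv (hτ : 0 ≤ τ) {h h' : ℝ → ℝ} (hh' : ContinuousOn h' (Icc 0 τ))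
    (hderiv : ∀ t ∈ Icc 0 τ, HasDerivWithinAt h (h' t) (Icc 0 τ) t) :
    truncLaplace τ l h' = h τ + l * truncLaplace τ l h - Real.exp (l * τ) * h 0 := by
  have hexp (t : ℝ) : HasDerivAt (fun t => Real.exp (l * (τ - t)))
      (-l * Real.exp (l * (τ - t))) t :=
    (((hasDerivAt_id t).const_sub τ).const_mul l).exp.congr_deriv (by simp; ring)
  have hparts := intervalIntegral.integral_mul_deriv_eq_deriv_mul_of_hasDerivWithinAt
    (a := 0) (b := τ) (fun t _ => (hexp t).hasDerivWithinAt)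
    (by rwa [uIcc_of_le hτ]) (Continuous.intervalIntegrable (by fun_prop) _ _)
    (hh'.intervalIntegrable_of_Icc hτ)
  simp only [mul_assoc, intervalIntegral.integral_const_mul] at hparts
  simp only [truncLaplace, hparts, sub_self, sub_zero, mul_zero, Real.exp_zero]
  ring

lemma hasDerivAt_truncLaplace (hτ : 0 ≤ τ) {p q : ℝ → ℝ → ℝ}
    (hp : ContinuousOn (fun z : ℝ × ℝ => p z.1 z.2) (Icc 0 τ ×ˢ univ))
    (hq : ContinuousOn (fun z : ℝ × ℝ => q z.1 z.2) (Icc 0 τ ×ˢ univ))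
    (hpq : ∀ t ∈ Icc 0 τ, ∀ x, HasDerivAt (p t) (q t x) x) (x : ℝ) :
    HasDerivAt (fun y => truncLaplace τ l fun t => p t y) (truncLaplace τ l fun t => q t x) x := by
  have hexp : Continuous fun t => Real.exp (l * (τ - t)) := by fun_prop
  have hbox : ContinuousOn (fun z : ℝ × ℝ => Real.exp (l * (τ - z.1)) * q z.1 z.2)
      (Icc 0 τ ×ˢ Icc (x - 1) (x + 1)) :=
    (hexp.comp continuous_fst).continuousOn.mul (hq.mono (prod_mono_right (subset_univ _)))
  obtain ⟨C, hC⟩ := (isCompact_Icc.prod isCompact_Icc).exists_bound_of_continuousOn hbox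
  have hmem : ∀ {t}, t ∈ uIoc 0 τ → t ∈ Icc 0 τ := fun ht =>
    Ioc_subset_Icc_self (uIoc_of_le hτ ▸ ht)
  exact (intervalIntegral.hasDerivAt_integral_of_dominated_loc_of_deriv_le
    (F' := fun y t => Real.exp (l * (τ - t)) * q t y) (bound := fun _ => C)
    (Icc_mem_nhds (by linarith) (by linarith))
    (.of_forall fun y =>
      aestronglyMeasurable_mul_restrict_uIoc hτ hexp (continuousOn_slice_left hp y))
    (intervalIntegrable_exp_mul hτ (continuousOn_slice_left hp x))
    (aestronglyMeasurable_mul_restrict_uIoc hτ hexp (continuousOn_slice_left hq x))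
    (.of_forall fun t ht y hy => hC (t, y) ⟨hmem ht, hy⟩) intervalIntegrable_const
    (.of_forall fun t ht y _ => (hpq t (hmem ht) y).const_mul _)).2

lemma truncLaplace_parabolic {w wt wx wxx : ℝ → ℝ → ℝ} (hτ : 0 ≤ τ)
    (hw : HasParabolicDerivs (Icc 0 τ) w wt wx wxx) {a b x : ℝ} (hw0 : w 0 x = 0)
    (hpde : ∀ t ∈ Icc 0 τ, wt t x = a * wxx t x + b * wx t x) :
    a * truncLaplace τ l (fun t => wxx t x) + b * truncLaplace τ l (fun t => wx t x) =
      w τ x + l * truncLaplace τ l (fun t => w t x) := by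
  rw [← truncLaplace_linear hτ (continuousOn_slice_left hw.continuousOn_xx x)
      (continuousOn_slice_left hw.continuousOn_x x), ← truncLaplace_congr hτ hpde,
    truncLaplace_deriv hτ (continuousOn_slice_left hw.continuousOn_t x)
      fun t ht => hw.hasDerivWithinAt_t t ht x]
  simp [hw0]

end TruncLaplace

lemma abs_le_mul_exp_of_abs_second_deriv_le {H H' H'' : ℝ → ℝ} {K M μ x₁ x₀ : ℝ}
    (hH : ∀ y, HasDerivAt H (H' y) y) (hH' : ∀ y, HasDerivAt H' (H'' y) y)
    (hzero : H x₁ = 0) (hzero' : H' x₁ = 0) (hμ : 1 ≤ μ) (hK : 0 ≤ K) (hM : 0 ≤ M)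
    (hbound : ∀ y ∈ Icc x₁ x₀, |H'' y| ≤ K * (μ ^ 2 * |H y| + |H' y|) + M)
    {x : ℝ} (hx : x ∈ Icc x₁ x₀) :
    |H x| ≤ M * Real.exp ((1 + 2 * K) * (x - x₁) * μ) := by
  have hμ0 : 0 < μ := by linarith
  have hnorm (u v : ℝ) : ‖(μ * u, v)‖ = max (μ * |u|) |v| := by
    simp [Prod.norm_def, abs_of_pos hμ0]
  have hderiv (y : ℝ) : HasDerivAt (fun y => (μ * H y, H' y)) (μ * H' y, H'' y) y :=
    ((hH y).const_mul μ).prodMk (hH' y)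
  have hgronwall := norm_le_gronwallBound_of_norm_deriv_right_le (δ := 0)
    (K := (1 + 2 * K) * μ) (ε := M) (fun y _ => (hderiv y).continuousAt.continuousWithinAt)
    (fun y _ => (hderiv y).hasDerivWithinAt) (by simp [hzero, hzero']) (fun y hy => ?_) x hx
  · have hrate : 1 ≤ (1 + 2 * K) * μ := by nlinarith
    rw [gronwallBound_of_K_ne_0 (by linarith), hnorm] at hgronwall
    simp only [zero_mul, zero_add] at hgronwall
    calc |H x| ≤ μ * |H x| := le_mul_of_one_le_left (abs_nonneg _) hμ
      _ ≤ M / ((1 + 2 * K) * μ) * (Real.exp ((1 + 2 * K) * μ * (x - x₁)) - 1) :=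
        (le_max_left _ _).trans hgronwall
      _ ≤ M * Real.exp ((1 + 2 * K) * μ * (x - x₁)) := by
        gcongr
        · exact sub_nonneg.2 (Real.one_le_exp (by nlinarith [hx.1]))
        · exact div_le_self hM hrate
        · linarith
      _ = M * Real.exp ((1 + 2 * K) * (x - x₁) * μ) := by ring_nf
  · rw [hnorm, hnorm]
    set N := max (μ * |H y|) |H' y|
    have hHN : μ * |H y| ≤ N := le_max_left _ _
    have hHN' : |H' y| ≤ N := le_max_right _ _
    have hN : 0 ≤ N := (abs_nonneg _).trans hHN'
    have hNμ : N ≤ μ * N := le_mul_of_one_le_left hN hμ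
    have hKN : 0 ≤ K * (μ * N) := by positivity
    refine max_le (by nlinarith) ((hbound y ⟨hy.1, hy.2.le⟩).trans ?_)
    calc K * (μ ^ 2 * |H y| + |H' y|) + M ≤ K * (μ * N + μ * N) + M := by
          rw [sq, mul_assoc]
          gcongr
          exact hHN'.trans hNμ
      _ ≤ (1 + 2 * K) * μ * N + M := by nlinarith

lemma exists_forall_add_abs_le_mul {s : Set ℝ} (hs : IsCompact s) {a b : ℝ → ℝ}
    (ha : ContinuousOn a s) (hb : ContinuousOn b s) (hpos : ∀ x ∈ s, 0 < a x) (C : ℝ) :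
    ∃ k, 0 < k ∧ ∀ x ∈ s, C + |b x| ≤ k * a x := by
  obtain ⟨k, hk⟩ := hs.exists_bound_of_continuousOn
    ((continuousOn_const.add hb.abs).div ha fun x hx => (hpos x hx).ne')
  refine ⟨max k 1, by positivity, fun x hx => ?_⟩
  rw [← div_le_iff₀ (hpos x hx)]
  exact ((le_abs_self _).trans (hk x hx)).trans (le_max_left _ _)

lemma isBigO_exp_mul_sqrt_exp_mul (c : ℝ) {r : ℝ} (hr : 0 < r) :
    (fun l => Real.exp (c * √l)) =O[atTop] fun l => Real.exp (r * l) := by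
  refine Real.isBigO_exp_comp_exp_comp.2 ⟨c ^ 2 / (4 * r), eventually_map.2 ?_⟩
  filter_upwards [eventually_ge_atTop 0] with l hl
  have hsq : c ^ 2 / (4 * r) - (c * √l - r * √l ^ 2) = (2 * r * √l - c) ^ 2 / (4 * r) := by
    field_simp
    ring
  have hnonneg : 0 ≤ (2 * r * √l - c) ^ 2 / (4 * r) := by positivity
  rw [Real.sq_sqrt hl] at hsq
  simp only [Pi.sub_apply]
  linarith

section UniqueContinuation

variable {τ x₁ x₀ : ℝ} {w wt wx wxx : ℝ → ℝ → ℝ} {a b : ℝ → ℝ}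

lemma exists_abs_truncLaplace_le_exp_sqrt (hτ : 0 ≤ τ)
    (hw : HasParabolicDerivs (Icc 0 τ) w wt wx wxx) (ha : ContinuousOn a (Icc x₁ x₀))
    (hb : ContinuousOn b (Icc x₁ x₀)) (hpos : ∀ x ∈ Icc x₁ x₀, 0 < a x)
    (hw0 : ∀ x ∈ Icc x₁ x₀, w 0 x = 0)
    (hpde : ∀ t ∈ Icc 0 τ, ∀ x ∈ Icc x₁ x₀, wt t x = a x * wxx t x + b x * wx t x)
    (hw₁ : ∀ t ∈ Icc 0 τ, w t x₁ = 0) (hwx₁ : ∀ t ∈ Icc 0 τ, wx t x₁ = 0)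
    {x : ℝ} (hx : x ∈ Icc x₁ x₀) :
    ∃ c M : ℝ, ∀ l, 1 ≤ l → |truncLaplace τ l (fun t => w t x)| ≤ M * Real.exp (c * √l) := by
  have hwτ : ContinuousOn (w τ) (Icc x₁ x₀) := fun y _ =>
    (hw.hasDerivAt_x τ ⟨hτ, le_rfl⟩ y).continuousAt.continuousWithinAt
  obtain ⟨K, hK0, hK⟩ := exists_forall_add_abs_le_mul isCompact_Icc ha hb hpos 1
  obtain ⟨M, hM0, hM⟩ := exists_forall_add_abs_le_mul isCompact_Icc ha hwτ hpos 0
  refine ⟨(1 + 2 * K) * (x - x₁), M, fun l hl => ?_⟩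
  have hl0 : 0 ≤ l := by linarith
  refine abs_le_mul_exp_of_abs_second_deriv_le
    (hasDerivAt_truncLaplace hτ hw.continuousOn hw.continuousOn_x hw.hasDerivAt_x)
    (hasDerivAt_truncLaplace hτ hw.continuousOn_x hw.continuousOn_xx hw.hasDerivAt_xx)
    ((truncLaplace_congr hτ hw₁).trans truncLaplace_zero)
    ((truncLaplace_congr hτ hwx₁).trans truncLaplace_zero)
    (Real.one_le_sqrt.2 hl) hK0.le hM0.le (fun y hy => ?_) hx
  have heq := truncLaplace_parabolic (l := l) hτ hw (hw0 y hy) fun t ht => hpde t ht y hy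
  set H := truncLaplace τ l fun t => w t y
  set H' := truncLaplace τ l fun t => wx t y
  set H'' := truncLaplace τ l fun t => wxx t y
  rw [Real.sq_sqrt hl0]
  refine le_of_mul_le_mul_left ?_ (hpos y hy)
  calc a y * |H''| = |w τ y + l * H - b y * H'| := by
        rw [← heq, add_sub_cancel_right, abs_mul, abs_of_pos (hpos y hy)]
    _ ≤ |w τ y| + l * |H| + |b y| * |H'| := by
        refine (abs_sub (w τ y + l * H) (b y * H')).trans ?_
        rw [abs_mul (b y)]
        gcongr
        simpa [abs_mul, abs_of_nonneg hl0] using abs_add_le (w τ y) (l * H)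
    _ ≤ M * a y + (1 + |b y|) * (l * |H| + |H'|) := by
        have := hM y hy
        have : 0 ≤ |b y| * (l * |H|) := by positivity
        nlinarith [abs_nonneg H']
    _ ≤ M * a y + K * a y * (l * |H| + |H'|) := by
        gcongr
        exact hK y hy
    _ = a y * (K * (l * |H| + |H'|) + M) := by ring

theorem eq_zero_of_zero_lateral_cauchyData (hτ : 0 < τ)
    (hw : HasParabolicDerivs (Icc 0 τ) w wt wx wxx) (ha : ContinuousOn a (Icc x₁ x₀))
    (hb : ContinuousOn b (Icc x₁ x₀)) (hpos : ∀ x ∈ Icc x₁ x₀, 0 < a x)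
    (hw0 : ∀ x ∈ Icc x₁ x₀, w 0 x = 0)
    (hpde : ∀ t ∈ Icc 0 τ, ∀ x ∈ Icc x₁ x₀, wt t x = a x * wxx t x + b x * wx t x)
    (hw₁ : ∀ t ∈ Icc 0 τ, w t x₁ = 0) (hwx₁ : ∀ t ∈ Icc 0 τ, wx t x₁ = 0) :
    ∀ t ∈ Icc 0 τ, ∀ x ∈ Icc x₁ x₀, w t x = 0 := by
  intro t ht x hx
  obtain ⟨c, M, hbound⟩ :=
    exists_abs_truncLaplace_le_exp_sqrt hτ.le hw ha hb hpos hw0 hpde hw₁ hwx₁ hx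
  refine eqOn_zero_of_truncLaplace_isBigO hτ (continuousOn_slice_left hw.continuousOn x)
    (fun r hr => ?_) ht
  refine IsBigO.trans (.of_bound M ?_) (isBigO_exp_mul_sqrt_exp_mul c hr)
  filter_upwards [eventually_ge_atTop 1] with l hl
  simpa using hbound l hl

end UniqueContinuation

lemma nonneg_of_isLocalMin_of_hasDerivAt {f f' : ℝ → ℝ} {f'' x : ℝ}
    (hf : ∀ᶠ y in 𝓝 x, HasDerivAt f (f' y) y) (hf' : HasDerivAt f' f'' x)
    (hmin : IsLocalMin f x) : 0 ≤ f'' := by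
  have hderiv : deriv f =ᶠ[𝓝 x] f' := hf.mono fun y hy => hy.deriv
  have hderiv₂ : deriv (deriv f) x = f'' := by rw [hderiv.deriv_eq, hf'.deriv]
  by_contra! hneg
  have hmax := isLocalMax_of_deriv_deriv_neg (hderiv₂ ▸ hneg) hmin.deriv_eq_zero
    hf.self_of_nhds.continuousAt
  have hconst : f =ᶠ[𝓝 x] fun _ => f x := by
    filter_upwards [hmin, hmax] with y h₁ h₂ using le_antisymm h₂ h₁
  have hzero : deriv (deriv f) x = 0 := by
    rw [hconst.deriv.deriv_eq]
    simp
  linarith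

lemma sub_mul_nonneg_of_isMinOn {s : Set ℝ} (hs : Convex ℝ s) {f : ℝ → ℝ} {f' x y : ℝ}
    (hf : HasDerivWithinAt f f' s x) (hmin : IsMinOn f s x) (hx : x ∈ s) (hy : y ∈ s) :
    0 ≤ (y - x) * f' := by
  simpa using hmin.localize.hasFDerivWithinAt_nonneg hf.hasFDerivWithinAt
    (sub_mem_posTangentConeAt_of_segment_subset (hs.segment_subset hx hy))

lemma exists_mul_le_of_hasDerivWithinAt {f : ℝ → ℝ} {f' c τ : ℝ} (hτ : 0 < τ)
    (hf : HasDerivWithinAt f f' (Icc 0 τ) 0) (hf0 : f 0 = 0) (hc : c < f') :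
    ∃ s ∈ Ioc 0 τ, ∀ t ∈ Icc 0 s, c * t ≤ f t := by
  have hright : HasDerivWithinAt f f' (Ioi 0) 0 :=
    (hf.mono_of_mem_nhdsWithin (Icc_mem_nhdsGE hτ)).Ioi_of_Ici
  have hslope : ∀ᶠ t in 𝓝[>] 0, c < slope f 0 t :=
    ((hasDerivWithinAt_iff_tendsto_slope' self_notMem_Ioi).1 hright).eventually_const_lt hc
  obtain ⟨s, hs, hsub⟩ :=
    mem_nhdsGT_iff_exists_Ioc_subset.1 (inter_mem hslope (Ioc_mem_nhdsGT hτ))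
  refine ⟨s, ⟨hs, (hsub ⟨hs, le_rfl⟩).2.2⟩, fun t ht => ?_⟩
  rcases ht.1.eq_or_lt with rfl | ht0
  · simp [hf0]
  · have hlt : c < slope f 0 t := (hsub ⟨ht0, ht.2⟩).1
    rw [slope_def_field, hf0, sub_zero, sub_zero, lt_div_iff₀ ht0] at hlt
    exact hlt.le

section MinimumPrinciple

variable {τ x₀ x₂ : ℝ} {w wt wx wxx : ℝ → ℝ → ℝ}

theorem nonneg_of_strict_supersolution (hτ : 0 ≤ τ) (hx : x₀ ≤ x₂)
    (hw : HasParabolicDerivs (Icc 0 τ) w wt wx wxx) {a b : ℝ → ℝ → ℝ}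
    (ha : ∀ t ∈ Icc 0 τ, ∀ x ∈ Ioo x₀ x₂, 0 ≤ a t x)
    (hpde : ∀ t ∈ Icc 0 τ, ∀ x ∈ Ioo x₀ x₂, a t x * wxx t x + b t x * wx t x < wt t x)
    (hinit : ∀ x ∈ Icc x₀ x₂, 0 ≤ w 0 x) (hleft : ∀ t ∈ Icc 0 τ, 0 ≤ w t x₀)
    (hright : ∀ t ∈ Icc 0 τ, 0 ≤ w t x₂) :
    ∀ t ∈ Icc 0 τ, ∀ x ∈ Icc x₀ x₂, 0 ≤ w t x := by
  obtain ⟨⟨t, x⟩, ⟨ht : t ∈ Icc 0 τ, hx : x ∈ Icc x₀ x₂⟩, hmin⟩ :=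
    (isCompact_Icc.prod isCompact_Icc).exists_isMinOn
      ⟨(0, x₀), ⟨le_rfl, hτ⟩, ⟨le_rfl, hx⟩⟩ (hw.continuousOn.mono (prod_mono_right (subset_univ _)))
  replace hmin : ∀ s ∈ Icc 0 τ, ∀ y ∈ Icc x₀ x₂, w t x ≤ w s y := fun s hs y hy =>
    hmin (mk_mem_prod hs hy)
  suffices h : 0 ≤ w t x from fun s hs y hy => h.trans (hmin s hs y hy)
  by_contra hneg
  have ht0 : 0 < t := ht.1.lt_of_ne fun h => hneg (h ▸ hinit x hx)
  have hxl : x₀ < x := hx.1.lt_of_ne fun h => hneg (h ▸ hleft t ht)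
  have hxr : x < x₂ := hx.2.lt_of_ne fun h => hneg (h ▸ hright t ht)
  have hlocal : IsLocalMin (w t) x := by
    filter_upwards [Icc_mem_nhds hxl hxr] with y hy using hmin t ht y hy
  have hwx : wx t x = 0 := hlocal.hasDerivAt_eq_zero (hw.hasDerivAt_x t ht x)
  have hwxx : 0 ≤ wxx t x := nonneg_of_isLocalMin_of_hasDerivAt
    (.of_forall (hw.hasDerivAt_x t ht)) (hw.hasDerivAt_xx t ht x) hlocal
  have hwt : 0 ≤ (0 - t) * wt t x := sub_mul_nonneg_of_isMinOn (convex_Icc 0 τ)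
    (hw.hasDerivWithinAt_t t ht x) (fun s hs => hmin s hs x hx) ht ⟨le_rfl, hτ⟩
  have hlt := hpde t ht x ⟨hxl, hxr⟩
  rw [hwx, mul_zero, add_zero] at hlt
  have hwt0 : 0 < wt t x := (mul_nonneg (ha t ht x ⟨hxl, hxr⟩) hwxx).trans_lt hlt
  nlinarith

end MinimumPrinciple

/-- The barrier of the boundary point lemma: an exponential profile travelling to the right at
speed `C`, which vanishes on the line `x - x₀ = C * (τ - t)` and is negative to the left of it. -/
noncomputable def travellingBarrier (k C τ x₀ t x : ℝ) : ℝ :=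
  Real.exp (k * (x - x₀ - C * (τ - t))) - 1

lemma travellingBarrier_nonpos {k C τ x₀ t x : ℝ} (hk : 0 ≤ k) (hx : x - x₀ ≤ C * (τ - t)) :
    travellingBarrier k C τ x₀ t x ≤ 0 :=
  sub_nonpos.2 (Real.exp_le_one_iff.2 (mul_nonpos_of_nonneg_of_nonpos hk (sub_nonpos.2 hx)))

lemma hasParabolicDerivs_travellingBarrier (J : Set ℝ) (k C τ x₀ : ℝ) :
    HasParabolicDerivs J (travellingBarrier k C τ x₀)
      (fun t x => k * C * Real.exp (k * (x - x₀ - C * (τ - t))))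
      (fun t x => k * Real.exp (k * (x - x₀ - C * (τ - t))))
      (fun t x => k ^ 2 * Real.exp (k * (x - x₀ - C * (τ - t)))) := by
  have hx (t x : ℝ) : HasDerivAt (fun y => Real.exp (k * (y - x₀ - C * (τ - t))))
      (k * Real.exp (k * (x - x₀ - C * (τ - t)))) x :=
    ((((hasDerivAt_id x).sub_const x₀).sub_const _).const_mul k).exp.congr_deriv
      (by simp [mul_comm])
  have ht (t x : ℝ) : HasDerivAt (fun s => Real.exp (k * (x - x₀ - C * (τ - s))))
      (k * C * Real.exp (k * (x - x₀ - C * (τ - t)))) t :=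
    (((((hasDerivAt_id t).const_sub τ).const_mul C).const_sub (x - x₀)).const_mul k).exp.congr_deriv
      (by simp [mul_comm])
  refine ⟨?_, ?_, ?_, ?_, fun t _ x => ((ht t x).sub_const 1).hasDerivWithinAt,
    fun t _ x => (hx t x).sub_const 1, fun t _ x => ?_⟩
  · unfold travellingBarrier
    fun_prop
  · fun_prop
  · fun_prop
  · fun_prop
  · exact ((hx t x).const_mul k).congr_deriv (by ring)

lemma exp_sub_one_le_mul_exp (y : ℝ) : Real.exp y - 1 ≤ y * Real.exp y := by
  have h := mul_le_mul_of_nonneg_right (Real.add_one_le_exp (-y)) (Real.exp_pos y).le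
  rw [← Real.exp_add, neg_add_cancel, Real.exp_zero] at h
  linarith

section BoundaryPoint

variable {τ x₀ x₂ c : ℝ} {w wt wx wxx : ℝ → ℝ → ℝ} {a b : ℝ → ℝ}

lemma exists_mul_travellingBarrier_le (hτ : 0 < τ) (hx : x₀ < x₂)
    (hw : HasParabolicDerivs (Icc 0 τ) w wt wx wxx) (ha : ContinuousOn a (Icc x₀ x₂))
    (hb : ContinuousOn b (Icc x₀ x₂)) (hpos : ∀ x ∈ Icc x₀ x₂, 0 < a x)
    (hpde : ∀ t ∈ Icc 0 τ, ∀ x ∈ Ioo x₀ x₂, a x * wxx t x + b x * wx t x ≤ wt t x)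
    (hinit : ∀ x ∈ Icc x₀ x₂, 0 ≤ w 0 x) (hleft : ∀ t ∈ Icc 0 τ, 0 ≤ w t x₀) (hc : 0 < c)
    (hright : ∀ t ∈ Icc 0 τ, c * t ≤ w t x₂) :
    ∃ η k C, 0 < η ∧ 0 < k ∧
      ∀ t ∈ Icc 0 τ, ∀ x ∈ Icc x₀ x₂, 0 ≤ w t x - η * travellingBarrier k C τ x₀ t x := by
  set C := (x₂ - x₀) / τ
  have hC0 : 0 < C := div_pos (sub_pos.2 hx) hτ
  have hCτ : C * τ = x₂ - x₀ := div_mul_cancel₀ _ hτ.ne'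
  obtain ⟨k, hk0, hk⟩ := exists_forall_add_abs_le_mul isCompact_Icc ha hb hpos (C + 1)
  set η := c / (k * C * Real.exp (k * (x₂ - x₀))) with hη
  have hη0 : 0 < η := by positivity
  refine ⟨η, k, C, hη0, hk0, nonneg_of_strict_supersolution (a := fun _ => a) (b := fun _ => b)
    hτ.le hx.le (hw.sub ((hasParabolicDerivs_travellingBarrier _ k C τ x₀).const_mul η))
    (fun _ _ x hx => (hpos x (Ioo_subset_Icc_self hx)).le) (fun t ht x hx => ?_) (fun x hx => ?_)
    (fun t ht => ?_) fun t ht => ?_⟩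
  · have hkx : 0 < k * a x + b x - C := by
      linarith [hk x (Ioo_subset_Icc_self hx), neg_abs_le (b x)]
    have hgain : 0 < η * k * Real.exp (k * (x - x₀ - C * (τ - t))) * (k * a x + b x - C) := by
      positivity
    have := hpde t ht x hx
    linarith
  · have := travellingBarrier_nonpos (C := C) (τ := τ) (t := 0) hk0.le
      (by linarith [hx.2] : x - x₀ ≤ C * (τ - 0))
    nlinarith [hinit x hx]
  · have := travellingBarrier_nonpos (C := C) (τ := τ) (t := t) hk0.le
      (by nlinarith [ht.2] : x₀ - x₀ ≤ C * (τ - t))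
    nlinarith [hleft t ht]
  · have hline : k * (x₂ - x₀ - C * (τ - t)) = k * C * t := by linear_combination -k * hCτ
    have hexp : Real.exp (k * C * t) ≤ Real.exp (k * (x₂ - x₀)) := by
      rw [← hCτ, ← mul_assoc]
      exact Real.exp_le_exp.2 (mul_le_mul_of_nonneg_left ht.2 (by positivity))
    rw [sub_nonneg]
    calc η * travellingBarrier k C τ x₀ t x₂ = η * (Real.exp (k * C * t) - 1) := by
          rw [travellingBarrier, hline]
      _ ≤ η * (k * C * t * Real.exp (k * C * t)) := by
          gcongr
          exact exp_sub_one_le_mul_exp _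
      _ ≤ η * (k * C * t * Real.exp (k * (x₂ - x₀))) := by
          have := ht.1
          gcongr
      _ = c * t := by rw [hη]; field_simp
      _ ≤ w t x₂ := hright t ht

theorem deriv_x_pos_of_supersolution (hτ : 0 < τ) (hx : x₀ < x₂)
    (hw : HasParabolicDerivs (Icc 0 τ) w wt wx wxx) (ha : ContinuousOn a (Icc x₀ x₂))
    (hb : ContinuousOn b (Icc x₀ x₂)) (hpos : ∀ x ∈ Icc x₀ x₂, 0 < a x)
    (hpde : ∀ t ∈ Icc 0 τ, ∀ x ∈ Ioo x₀ x₂, a x * wxx t x + b x * wx t x ≤ wt t x)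
    (hinit : ∀ x ∈ Icc x₀ x₂, 0 ≤ w 0 x) (hleft : ∀ t ∈ Icc 0 τ, 0 ≤ w t x₀) (hc : 0 < c)
    (hright : ∀ t ∈ Icc 0 τ, c * t ≤ w t x₂) (hwτ : w τ x₀ = 0) : 0 < wx τ x₀ := by
  obtain ⟨η, k, C, hη, hk, hbarrier⟩ :=
    exists_mul_travellingBarrier_le hτ hx hw ha hb hpos hpde hinit hleft hc hright
  have hmem : τ ∈ Icc 0 τ := ⟨hτ.le, le_rfl⟩
  have hderiv := (hw.hasDerivAt_x τ hmem x₀).sub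
    (((hasParabolicDerivs_travellingBarrier _ k C τ x₀).hasDerivAt_x τ hmem x₀).const_mul η)
  have hmin : IsMinOn (fun x => w τ x - η * travellingBarrier k C τ x₀ τ x) (Icc x₀ x₂) x₀ := by
    intro x hx
    simpa [hwτ, travellingBarrier] using hbarrier τ hmem x hx
  have hnonneg := sub_mul_nonneg_of_isMinOn (convex_Icc x₀ x₂) hderiv.hasDerivWithinAt hmin
    ⟨le_rfl, hx.le⟩ ⟨hx.le, le_rfl⟩
  have := nonneg_of_mul_nonneg_right hnonneg (sub_pos.2 hx)
  simp only [sub_self, mul_zero, Real.exp_zero, mul_one] at this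
  have : 0 < η * k := mul_pos hη hk
  linarith

lemma not_strict_supersolution_of_zero_cauchyData (hτ : 0 < τ) (hx : x₀ < x₂)
    (hw : HasParabolicDerivs (Icc 0 τ) w wt wx wxx) (ha : ContinuousOn a (Icc x₀ x₂))
    (hb : ContinuousOn b (Icc x₀ x₂)) (hpos : ∀ x ∈ Icc x₀ x₂, 0 < a x) (hw0 : w 0 = 0)
    (hwx₀ : ∀ t ∈ Icc 0 τ, w t x₀ = 0) (hwxx₀ : ∀ t ∈ Icc 0 τ, wx t x₀ = 0) :
    ¬ ∀ t ∈ Icc 0 τ, ∀ x ∈ Ioc x₀ x₂, a x * wxx t x + b x * wx t x < wt t x := by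
  intro hpde
  have hmem : (0 : ℝ) ∈ Icc 0 τ := ⟨le_rfl, hτ.le⟩
  have hwx0 : wx 0 = 0 := funext fun x =>
    (hw.hasDerivAt_x 0 hmem x).unique (by rw [hw0]; exact hasDerivAt_const x (0 : ℝ))
  have hwxx0 : wxx 0 = 0 := funext fun x =>
    (hw.hasDerivAt_xx 0 hmem x).unique (by rw [hwx0]; exact hasDerivAt_const x (0 : ℝ))
  have hwt : 0 < wt 0 x₂ := by simpa [hwx0, hwxx0] using hpde 0 hmem x₂ ⟨hx, le_rfl⟩
  obtain ⟨s, hs, hright⟩ := exists_mul_le_of_hasDerivWithinAt hτ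
    (hw.hasDerivWithinAt_t 0 hmem x₂) (congrFun hw0 x₂) (half_lt_self hwt)
  have hsub : Icc 0 s ⊆ Icc 0 τ := Icc_subset_Icc_right hs.2
  have hsmem : s ∈ Icc 0 τ := Ioc_subset_Icc_self hs
  refine (deriv_x_pos_of_supersolution hs.1 hx (hw.mono hsub) ha hb hpos
    (fun t ht x hx => (hpde t (hsub ht) x (Ioo_subset_Ioc_self hx)).le) (fun x _ => ?_)
    (fun t ht => (hwx₀ t (hsub ht)).ge) (half_pos hwt) hright (hwx₀ s hsmem)).ne'
    (hwxx₀ s hsmem)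
  simp [hw0]

theorem source_eq_zero_of_zero_cauchyData (hτ : 0 < τ)
    (hw : HasParabolicDerivs (Icc 0 τ) w wt wx wxx) (ha : ContinuousOn a (Ici x₀))
    (hb : ContinuousOn b (Ici x₀)) (hpos : ∀ x ∈ Ici x₀, 0 < a x) (hw0 : w 0 = 0)
    (hwx₀ : ∀ t ∈ Icc 0 τ, w t x₀ = 0) (hwxx₀ : ∀ t ∈ Icc 0 τ, wx t x₀ = 0)
    {ρ : ℝ → ℝ} {G : ℝ → ℝ → ℝ} (hρ : ∀ᶠ x in 𝓝[>] x₀, 0 < ρ x)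
    (hG : ContinuousWithinAt (fun z : ℝ × ℝ => G z.1 z.2) (Icc 0 τ ×ˢ univ) (0, x₀))
    (hpde : ∀ᶠ x in 𝓝[>] x₀, ∀ t ∈ Icc 0 τ,
      wt t x = a x * wxx t x + b x * wx t x + ρ x * G t x) : G 0 x₀ = 0 := by
  by_contra hne
  set c := G 0 x₀
  have hGpos : ∀ᶠ z in 𝓝[≥] (0 : ℝ) ×ˢ 𝓝 x₀, 0 < c * G z.1 z.2 := by
    rw [← nhdsWithin_Icc_eq_nhdsGE hτ, ← nhdsWithin_univ x₀, ← nhdsWithin_prod_eq]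
    exact (hG.const_mul c).eventually_const_lt (mul_self_pos.2 hne)
  obtain ⟨P, hP, Q, hQ, hPQ⟩ := eventually_prod_iff.1 hGpos
  obtain ⟨s, hs, hsP⟩ := mem_nhdsGE_iff_exists_Icc_subset.1 (inter_mem hP (Icc_mem_nhdsGE hτ))
  obtain ⟨x₂, hx₂, hx₂Q⟩ := mem_nhdsGT_iff_exists_Ioc_subset.1
    (inter_mem (nhdsWithin_le_nhds hQ) (inter_mem hρ hpde))
  have hsub : Icc 0 s ⊆ Icc 0 τ := fun t ht => (hsP ht).2
  refine not_strict_supersolution_of_zero_cauchyData hs hx₂ ((hw.mono hsub).const_mul c)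
    (ha.mono Icc_subset_Ici_self) (hb.mono Icc_subset_Ici_self)
    (fun x hx => hpos x hx.1) (by ext x; simp [hw0])
    (fun t ht => by simp [hwx₀ t (hsub ht)]) (fun t ht => by simp [hwxx₀ t (hsub ht)])
    fun t ht x hx => ?_
  obtain ⟨hQx, hρx : 0 < ρ x, hpdex⟩ := hx₂Q hx
  have hsource : 0 < ρ x * (c * G t x) := mul_pos hρx (hPQ (hsP ht).1 hQx)
  rw [hpdex t (hsub ht)]
  linarith

end BoundaryPoint

/-- At every point, `ψ` is the restriction of one analytic function to the left of the point and
of another one to the right. For a continuous function this is what remains of piecewise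
analyticity once the subdivision is forgotten. -/
def OneSidedAnalytic (ψ : ℝ → ℝ) : Prop :=
  ∀ x, AnalyticWithinAt ℝ ψ (Iic x) x ∧ AnalyticWithinAt ℝ ψ (Ici x) x

namespace OneSidedAnalytic

variable {ψ : ℝ → ℝ}

lemma continuous (hψ : OneSidedAnalytic ψ) : Continuous ψ :=
  continuous_iff_continuousAt.2 fun x => continuousAt_iff_continuous_left_right.2
    ⟨(hψ x).1.continuousWithinAt, (hψ x).2.continuousWithinAt⟩

lemma neg (hψ : OneSidedAnalytic ψ) : OneSidedAnalytic fun x => -ψ x := fun x =>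
  ⟨(hψ x).1.neg, (hψ x).2.neg⟩

lemma comp_neg (hψ : OneSidedAnalytic ψ) : OneSidedAnalytic fun x => ψ (-x) := fun x =>
  ⟨(hψ (-x)).2.comp analyticWithinAt_id.neg fun _ hy => mem_Ici.2 (neg_le_neg hy),
    (hψ (-x)).1.comp analyticWithinAt_id.neg fun _ hy => mem_Iic.2 (neg_le_neg hy)⟩

end OneSidedAnalytic

lemma exists_int_and_not_succ {P : ℤ → Prop} (hbot : ∀ᶠ j in atBot, P j)
    (htop : ∀ᶠ j in atTop, ¬P j) : ∃ j, P j ∧ ¬P (j + 1) := by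
  obtain ⟨N, hN⟩ := eventually_atTop.1 htop
  obtain ⟨j, hj, hmax⟩ := Int.exists_greatest_of_bdd
    ⟨N, fun i hi => not_lt.1 fun h => hN i h.le hi⟩ hbot.exists
  exact ⟨j, hj, fun h => (Int.lt_succ j).not_ge (hmax _ h)⟩

lemma PiecewiseAnalytic.oneSidedAnalytic {ψ : ℝ → ℝ} (hψ : PiecewiseAnalytic ψ)
    (hcont : Continuous ψ) : OneSidedAnalytic ψ := by
  obtain ⟨-, κ, φ, -, hmono, hbot, htop, -, hφ, heq⟩ := hψ
  have hlt (j : ℤ) : κ j < κ (j + 1) := hmono (Int.lt_succ j)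
  have hpiece (j : ℤ) : AnalyticOn ℝ ψ (Icc (κ j) (κ (j + 1))) :=
    (hφ j).congr <| EqOn.of_subset_closure (heq j) hcont.continuousOn (hφ j).continuousOn
      Ico_subset_Icc_self (closure_Ico (hlt j).ne).ge
  refine fun x => ⟨?_, ?_⟩
  · obtain ⟨j, hj, hj'⟩ := exists_int_and_not_succ (hbot.eventually (eventually_lt_atBot x))
      ((htop.eventually (eventually_ge_atTop x)).mono fun _ => not_lt.2)
    exact (hpiece j x ⟨hj.le, not_lt.1 hj'⟩).mono_of_mem_nhdsWithin
      (mem_of_superset (Icc_mem_nhdsLE hj) (Icc_subset_Icc_right (not_lt.1 hj')))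
  · obtain ⟨j, hj, hj'⟩ := exists_int_and_not_succ (hbot.eventually (eventually_le_atBot x))
      ((htop.eventually (eventually_gt_atTop x)).mono fun _ => not_le.2)
    exact (hpiece j x ⟨hj, (not_le.1 hj').le⟩).mono_of_mem_nhdsWithin
      (mem_of_superset (Icc_mem_nhdsGE (not_le.1 hj')) (Icc_subset_Icc_left hj))

lemma ClassM.oneSidedAnalytic {ψ : ℝ → ℝ} (hψ : ClassM ψ) : OneSidedAnalytic ψ :=
  let ⟨⟨_, hlip⟩, hpiece⟩ := hψ
  hpiece.oneSidedAnalytic hlip.continuous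

lemma eventually_eq_zero_or_exists_pow_smul {E : Type*} [NormedAddCommGroup E] [NormedSpace ℝ E]
    [CompleteSpace E] {F : ℝ → E} {x₀ : ℝ} (hF : AnalyticWithinAt ℝ F (Ici x₀) x₀) :
    (∀ᶠ x in 𝓝[>] x₀, F x = 0) ∨
      ∃ (n : ℕ) (g : ℝ → E), AnalyticAt ℝ g x₀ ∧ g x₀ ≠ 0 ∧
        ∀ᶠ x in 𝓝[>] x₀, F x = (x - x₀) ^ n • g x := by
  obtain ⟨F', hFF', hF'⟩ := analyticWithinAt_iff_exists_analyticAt.1 hF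
  rw [insert_eq_of_mem self_mem_Ici] at hFF'
  replace hFF' : F =ᶠ[𝓝[>] x₀] F' := nhdsWithin_mono x₀ Ioi_subset_Ici_self hFF'
  refine or_iff_not_imp_left.2 fun hne => ?_
  obtain ⟨n, g, hg, hg0, hF'g⟩ := hF'.exists_eventuallyEq_pow_smul_nonzero_iff.2 fun h =>
    hne (by filter_upwards [hFF', nhdsWithin_le_nhds h] with x h₁ h₂ using h₁.trans h₂)
  refine ⟨n, g, hg, hg0, ?_⟩
  filter_upwards [hFF', nhdsWithin_le_nhds hF'g] with x h₁ h₂ using h₁.trans h₂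

section ClassicalSolution

variable {T ε : ℝ} {b bt σ σt f : ℝ → ℝ} {u v : ℝ → ℝ → ℝ}

namespace IsClassicalSolution

lemma hasParabolicDerivs (hu : IsClassicalSolution T b σ f u) :
    HasParabolicDerivs (Ico 0 T) u (fun t x => deriv (fun s => u s x) t)
      (fun t x => deriv (u t) x) (fun t x => deriv (deriv (u t)) x) :=
  let ⟨hcont, ht, hx, hxx, hcont_t, hcont_x, hcont_xx, _, _⟩ := hu
  ⟨hcont, hcont_t, hcont_x, hcont_xx, fun t h x => (ht t h x).hasDerivAt.hasDerivWithinAt,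
    fun t h x => (hx t h x).hasDerivAt, fun t h x => (hxx t h x).hasDerivAt⟩

lemma pde (hu : IsClassicalSolution T b σ f u) {t : ℝ} (ht : t ∈ Ico 0 T) (x : ℝ) :
    deriv (fun s => u s x) t =
      1 / 2 * σ x ^ 2 * deriv (deriv (u t)) x + b x * deriv (u t) x :=
  let ⟨_, _, _, _, _, _, _, hpde, _⟩ := hu
  hpde t ht x

lemma initial (hu : IsClassicalSolution T b σ f u) : u 0 = f :=
  let ⟨_, _, _, _, _, _, _, _, hinit⟩ := hu
  funext hinit

lemma comp_neg (hu : IsClassicalSolution T b σ f u) :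
    IsClassicalSolution T (fun x => -b (-x)) (fun x => σ (-x)) (fun x => f (-x))
      (fun t x => u t (-x)) := by
  have hux (t : ℝ) : deriv (fun x => u t (-x)) = fun x => -deriv (u t) (-x) :=
    funext (deriv_comp_neg (u t))
  have huxx (t : ℝ) : deriv (fun x => -deriv (u t) (-x)) = fun x => deriv (deriv (u t)) (-x) := by
    ext x
    rw [deriv.fun_neg, deriv_comp_neg, neg_neg]
  have hneg : ContinuousOn (fun p : ℝ × ℝ => (p.1, -p.2)) (Ico 0 T ×ˢ univ) := by fun_prop
  have hmaps : MapsTo (fun p : ℝ × ℝ => (p.1, -p.2)) (Ico 0 T ×ˢ univ) (Ico 0 T ×ˢ univ) :=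
    fun p hp => ⟨hp.1, trivial⟩
  obtain ⟨hcont, ht, hx, hxx, hcont_t, hcont_x, hcont_xx, hpde, hinit⟩ := hu
  simp only [IsClassicalSolution, hux, huxx]
  refine ⟨hcont.comp hneg hmaps, fun t h x => ht t h (-x),
    fun t h x => differentiableAt_comp_neg.2 (hx t h (-x)),
    fun t h x => (differentiableAt_comp_neg.2 (hxx t h (-x))).neg, hcont_t.comp hneg hmaps,
    (hcont_x.comp hneg hmaps).neg, hcont_xx.comp hneg hmaps, fun t h x => ?_,
    fun x => hinit (-x)⟩
  rw [hpde t h (-x), neg_mul_neg]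

lemma deriv_t_sub (hu : IsClassicalSolution T b σ f u) (hv : IsClassicalSolution T bt σt f v)
    {t : ℝ} (ht : t ∈ Ico 0 T) (x : ℝ) :
    deriv (fun s => u s x) t - deriv (fun s => v s x) t =
      1 / 2 * σ x ^ 2 * (deriv (deriv (u t)) x - deriv (deriv (v t)) x) +
        b x * (deriv (u t) x - deriv (v t) x) +
        (1 / 2 * (σ x ^ 2 - σt x ^ 2) * deriv (deriv (v t)) x +
          (b x - bt x) * deriv (v t) x) := by
  rw [hu.pde ht, hv.pde ht]
  ring

end IsClassicalSolution

/-- On the time interval `[0, ε)`, the functions `u` and `v` have the same value and the same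
normal derivative on the vertical line through `x`. -/
def SameCauchyData (ε x : ℝ) (u v : ℝ → ℝ → ℝ) : Prop :=
  ∀ t ∈ Ico 0 ε, u t x = v t x ∧ deriv (u t) x = deriv (v t) x

lemma SameCauchyData.comp_neg {x : ℝ} (h : SameCauchyData ε x u v) :
    SameCauchyData ε (-x) (fun t y => u t (-y)) (fun t y => v t (-y)) := fun t ht => by
  simp only [deriv_comp_neg, neg_neg, h t ht, and_self]

lemma IsClassicalSolution.sameCauchyData_of_eqOn_open (hu : IsClassicalSolution T b σ f u)
    (hv : IsClassicalSolution T bt σt f v) {ω : Set ℝ} (hω : IsOpen ω)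
    (h : ∀ t ∈ Ioo 0 ε, EqOn (u t) (v t) ω) {x : ℝ} (hx : x ∈ ω) : SameCauchyData ε x u v := by
  intro t ht
  have heq : u t =ᶠ[𝓝 x] v t := by
    rcases ht.1.eq_or_lt with rfl | ht0
    · rw [hu.initial, hv.initial]
    · exact (h t ⟨ht0, ht.2⟩).eventuallyEq_of_mem (hω.mem_nhds hx)
  exact ⟨heq.eq_of_nhds, heq.deriv_eq⟩

lemma SameCauchyData.of_coeff_eqOn {x₁ x₀ : ℝ} (hdata : SameCauchyData ε x₁ u v)
    (hu : IsClassicalSolution T b σ f u) (hv : IsClassicalSolution T bt σt f v) (hεT : ε ≤ T)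
    (hb : Continuous b) (hσ : Continuous σ) (hpos : ∀ x, 0 < σ x) (hx : x₁ ≤ x₀)
    (hcoeff : ∀ x ∈ Icc x₁ x₀, b x = bt x ∧ σ x = σt x) : SameCauchyData ε x₀ u v := by
  rcases hx.eq_or_lt with rfl | hlt
  · exact hdata
  have heq {t : ℝ} (ht : t ∈ Ico 0 ε) : EqOn (u t) (v t) (Icc x₁ x₀) := by
    obtain ⟨τ, htτ, hτε⟩ := exists_between ht.2
    have hsub : Icc 0 τ ⊆ Ico 0 T := Icc_subset_Ico_right (hτε.trans_le hεT)
    have hdata' {s : ℝ} (hs : s ∈ Icc 0 τ) := hdata s (Icc_subset_Ico_right hτε hs)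
    refine fun x hx => sub_eq_zero.1 (eq_zero_of_zero_lateral_cauchyData (ht.1.trans_lt htτ)
      ((hu.hasParabolicDerivs.sub hv.hasParabolicDerivs).mono hsub)
      (a := fun x => 1 / 2 * σ x ^ 2) (by fun_prop) hb.continuousOn
      (fun x _ => by have := hpos x; positivity)
      (fun x _ => by rw [hu.initial, hv.initial, sub_self]) (fun s hs x hx => ?_)
      (fun s hs => sub_eq_zero.2 (hdata' hs).1) (fun s hs => sub_eq_zero.2 (hdata' hs).2)
      t ⟨ht.1, htτ.le⟩ x hx)
    rw [hu.deriv_t_sub hv (hsub hs), (hcoeff x hx).1, (hcoeff x hx).2]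
    ring
  intro t ht
  have hmem : x₀ ∈ Icc x₁ x₀ := right_mem_Icc.2 hx
  have htT : t ∈ Ico 0 T := Ico_subset_Ico_right hεT ht
  have hux := (hu.hasParabolicDerivs.hasDerivAt_x t htT x₀).hasDerivWithinAt (s := Icc x₁ x₀)
  have hvx := (hv.hasParabolicDerivs.hasDerivAt_x t htT x₀).hasDerivWithinAt (s := Icc x₁ x₀)
  exact ⟨heq ht hmem, (uniqueDiffOn_Icc hlt x₀ hmem).eq_deriv _ hux
    (hvx.congr (heq ht) (heq ht hmem))⟩

lemma SameCauchyData.leading_coeff_eq_zero {x₀ : ℝ} (hdata : SameCauchyData ε x₀ u v)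
    (hu : IsClassicalSolution T b σ f u) (hv : IsClassicalSolution T bt σt f v) (hε : 0 < ε)
    (hεT : ε ≤ T) (hb : Continuous b) (hσ : Continuous σ) (hpos : ∀ x, 0 < σ x) {n : ℕ}
    {g : ℝ → ℝ × ℝ} (hg : ContinuousAt g x₀)
    (hcoeff : ∀ᶠ x in 𝓝[>] x₀,
      (1 / 2 * (σ x ^ 2 - σt x ^ 2), b x - bt x) = (x - x₀) ^ n • g x) :
    (g x₀).1 * deriv (deriv f) x₀ + (g x₀).2 * deriv f x₀ = 0 := by
  obtain ⟨τ, hτ, hτε⟩ := exists_between hε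
  have hsub : Icc 0 τ ⊆ Ico 0 T := Icc_subset_Ico_right (hτε.trans_le hεT)
  have hdata' {t : ℝ} (ht : t ∈ Icc 0 τ) := hdata t (Icc_subset_Ico_right hτε ht)
  have hvreg := hv.hasParabolicDerivs.mono hsub
  have hmem : ((0 : ℝ), x₀) ∈ Icc 0 τ ×ˢ univ := ⟨⟨le_rfl, hτ.le⟩, trivial⟩
  have hg' : ContinuousWithinAt (fun z : ℝ × ℝ => g z.2) (Icc 0 τ ×ˢ univ) (0, x₀) :=
    (hg.comp (f := Prod.snd) (x := ((0 : ℝ), x₀)) continuousAt_snd).continuousWithinAt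
  have hsource := source_eq_zero_of_zero_cauchyData hτ
    ((hu.hasParabolicDerivs.mono hsub).sub hvreg) (a := fun x => 1 / 2 * σ x ^ 2) (by fun_prop)
    hb.continuousOn (fun x _ => by have := hpos x; positivity)
    (by ext x; rw [hu.initial, hv.initial]; exact sub_self _)
    (fun t ht => sub_eq_zero.2 (hdata' ht).1) (fun t ht => sub_eq_zero.2 (hdata' ht).2)
    (ρ := fun x => (x - x₀) ^ n)
    (G := fun t x => (g x).1 * deriv (deriv (v t)) x + (g x).2 * deriv (v t) x)
    (eventually_mem_nhdsWithin.mono fun x hx => pow_pos (sub_pos.2 hx) n)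
    ((hg'.fst.mul (hvreg.continuousOn_xx _ hmem)).add
      (hg'.snd.mul (hvreg.continuousOn_x _ hmem))) ?_
  · simpa only [hv.initial] using hsource
  · filter_upwards [hcoeff] with x hx t ht
    obtain ⟨hA, hB⟩ := Prod.ext_iff.1 hx
    simp only [Prod.smul_fst, Prod.smul_snd, smul_eq_mul] at hA hB
    rw [hu.deriv_t_sub hv (hsub ht), hA, hB]
    ring

end ClassicalSolution

section TwoObservations

variable {T ε x₁ : ℝ} {b bt σ σt f₁ f₂ : ℝ → ℝ} {u₁ u₂ v₁ v₂ : ℝ → ℝ → ℝ}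

lemma eventually_coeff_eq_nhdsGT (hε : 0 < ε) (hεT : ε ≤ T) (hb : OneSidedAnalytic b)
    (hbt : OneSidedAnalytic bt) (hσ : OneSidedAnalytic σ) (hσt : OneSidedAnalytic σt)
    (hσpos : ∀ x, 0 < σ x) (hσtpos : ∀ x, 0 ≤ σt x) (hu₁ : IsClassicalSolution T b σ f₁ u₁)
    (hu₂ : IsClassicalSolution T b σ f₂ u₂) (hv₁ : IsClassicalSolution T bt σt f₁ v₁)
    (hv₂ : IsClassicalSolution T bt σt f₂ v₂)
    (hf : deriv f₁ x₁ * deriv (deriv f₂) x₁ ≠ deriv (deriv f₁) x₁ * deriv f₂ x₁)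
    (hdata₁ : SameCauchyData ε x₁ u₁ v₁) (hdata₂ : SameCauchyData ε x₁ u₂ v₂) :
    ∀ᶠ x in 𝓝[>] x₁, b x = bt x ∧ σ x = σt x := by
  have hanalytic : AnalyticWithinAt ℝ (fun x => (1 / 2 * (σ x ^ 2 - σt x ^ 2), b x - bt x))
      (Ici x₁) x₁ :=
    (analyticWithinAt_const.mul (((hσ x₁).2.pow 2).sub ((hσt x₁).2.pow 2))).prod
      ((hb x₁).2.sub (hbt x₁).2)
  rcases eventually_eq_zero_or_exists_pow_smul hanalytic with hzero | ⟨n, g, hg, hg0, hcoeff⟩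
  · filter_upwards [hzero] with x hx
    obtain ⟨hA : 1 / 2 * (σ x ^ 2 - σt x ^ 2) = 0, hB : b x - bt x = 0⟩ := Prod.ext_iff.1 hx
    exact ⟨sub_eq_zero.1 hB, (sq_eq_sq₀ (hσpos x).le (hσtpos x)).1 (by linarith)⟩
  · have h₁ := hdata₁.leading_coeff_eq_zero hu₁ hv₁ hε hεT hb.continuous hσ.continuous hσpos
      hg.continuousAt hcoeff
    have h₂ := hdata₂.leading_coeff_eq_zero hu₂ hv₂ hε hεT hb.continuous hσ.continuous hσpos
      hg.continuousAt hcoeff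
    refine absurd (Prod.ext ?_ ?_) hg0
    · exact (mul_eq_zero_iff_right (sub_ne_zero.2 hf)).1
        (by linear_combination deriv f₁ x₁ * h₂ - deriv f₂ x₁ * h₁)
    · exact (mul_eq_zero_iff_right (sub_ne_zero.2 hf)).1
        (by linear_combination deriv (deriv f₂) x₁ * h₁ - deriv (deriv f₁) x₁ * h₂)

theorem coeff_eq_of_le (hε : 0 < ε) (hεT : ε ≤ T) (hb : OneSidedAnalytic b)
    (hbt : OneSidedAnalytic bt) (hσ : OneSidedAnalytic σ) (hσt : OneSidedAnalytic σt)
    (hσpos : ∀ x, 0 < σ x) (hσtpos : ∀ x, 0 ≤ σt x) (hu₁ : IsClassicalSolution T b σ f₁ u₁)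
    (hu₂ : IsClassicalSolution T b σ f₂ u₂) (hv₁ : IsClassicalSolution T bt σt f₁ v₁)
    (hv₂ : IsClassicalSolution T bt σt f₂ v₂)
    (hf : ∀ x, deriv f₁ x * deriv (deriv f₂) x ≠ deriv (deriv f₁) x * deriv f₂ x)
    (hdata₁ : SameCauchyData ε x₁ u₁ v₁) (hdata₂ : SameCauchyData ε x₁ u₂ v₂) {x : ℝ}
    (hx : x₁ ≤ x) : b x = bt x ∧ σ x = σt x := by
  set s := {y | b y = bt y ∧ σ y = σt y}
  have hs : IsClosed s := (isClosed_eq hb.continuous hbt.continuous).inter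
    (isClosed_eq hσ.continuous hσt.continuous)
  have hlocal {y : ℝ} (h₁ : SameCauchyData ε y u₁ v₁) (h₂ : SameCauchyData ε y u₂ v₂) :
      s ∈ 𝓝[>] y :=
    eventually_coeff_eq_nhdsGT hε hεT hb hbt hσ hσt hσpos hσtpos hu₁ hu₂ hv₁ hv₂ (hf y) h₁ h₂
  have hx₁ : x₁ ∈ s :=
    hs.mem_of_tendsto (tendsto_id'.2 nhdsWithin_le_nhds) (hlocal hdata₁ hdata₂)
  refine (hs.inter isClosed_Icc).Icc_subset_of_forall_mem_nhdsGT_of_Icc_subset hx₁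
    (fun y hy hsub => hlocal ?_ ?_) ⟨hx, le_rfl⟩
  · exact hdata₁.of_coeff_eqOn hu₁ hv₁ hεT hb.continuous hσ.continuous hσpos hy.1 hsub
  · exact hdata₂.of_coeff_eqOn hu₂ hv₂ hεT hb.continuous hσ.continuous hσpos hy.1 hsub

theorem drift_diffusion_uniqueness_from_expectation_and_variance_general (hε : 0 < ε)
    (hεT : ε ≤ T) (hb : OneSidedAnalytic b) (hbt : OneSidedAnalytic bt) (hσ : OneSidedAnalytic σ)
    (hσt : OneSidedAnalytic σt) (hσpos : ∀ x, 0 < σ x) (hσtpos : ∀ x, 0 ≤ σt x)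
    (hu₁ : IsClassicalSolution T b σ f₁ u₁) (hu₂ : IsClassicalSolution T b σ f₂ u₂)
    (hv₁ : IsClassicalSolution T bt σt f₁ v₁) (hv₂ : IsClassicalSolution T bt σt f₂ v₂)
    (hf : ∀ x, deriv f₁ x * deriv (deriv f₂) x ≠ deriv (deriv f₁) x * deriv f₂ x)
    (hdata₁ : SameCauchyData ε x₁ u₁ v₁) (hdata₂ : SameCauchyData ε x₁ u₂ v₂) (x : ℝ) :
    b x = bt x ∧ σ x = σt x := by
  rcases le_total x₁ x with hx | hx
  · exact coeff_eq_of_le hε hεT hb hbt hσ hσt hσpos hσtpos hu₁ hu₂ hv₁ hv₂ hf hdata₁ hdata₂ hx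
  have hderiv₂ (f : ℝ → ℝ) (y : ℝ) : deriv (deriv fun z => f (-z)) y = deriv (deriv f) (-y) := by
    rw [funext (deriv_comp_neg f), deriv.fun_neg, deriv_comp_neg, neg_neg]
  have hreflect := coeff_eq_of_le hε hεT hb.comp_neg.neg hbt.comp_neg.neg hσ.comp_neg hσt.comp_neg
    (fun y => hσpos (-y)) (fun y => hσtpos (-y)) hu₁.comp_neg hu₂.comp_neg hv₁.comp_neg
    hv₂.comp_neg (fun y => ?_) hdata₁.comp_neg hdata₂.comp_neg (neg_le_neg hx)
  · simpa only [neg_neg, neg_inj] using hreflect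
  · simpa only [deriv_comp_neg, hderiv₂, neg_mul, mul_neg, ne_eq, neg_inj] using hf (-y)

end TwoObservations

/-- Corollary: the drift and diffusion coefficients are uniquely determined by
observation of the expectation and the variance on a small time-space cylinder. -/
theorem drift_diffusion_uniqueness_from_expectation_and_variance
    (T : ℝ) (hT : 0 < T)
    (b bt sigma sigmat : ℝ → ℝ)
    (hb : ClassM b) (hbt : ClassM bt)
    (hs : ClassM sigma) (hst : ClassM sigmat)
    (hspos : ∀ x, 0 < sigma x) (hstpos : ∀ x, 0 < sigmat x)
    (u₁ u₂ ut₁ ut₂ : ℝ → ℝ → ℝ)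
    (hu₁ : IsClassicalSolution T b sigma (fun x => x ^ 1) u₁)
    (hu₂ : IsClassicalSolution T b sigma (fun x => x ^ 2) u₂)
    (hut₁ : IsClassicalSolution T bt sigmat (fun x => x ^ 1) ut₁)
    (hut₂ : IsClassicalSolution T bt sigmat (fun x => x ^ 2) ut₂)
    (ε : ℝ) (hε : ε ∈ Ioo 0 T)
    (ω : Set ℝ) (hω : IsOpen ω) (hωne : ω.Nonempty)
    (hobsE : ∀ t ∈ Ioo 0 ε, ∀ x ∈ ω, u₁ t x = ut₁ t x)
    (hobsV : ∀ t ∈ Ioo 0 ε, ∀ x ∈ ω,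
      u₂ t x - (u₁ t x) ^ 2 = ut₂ t x - (ut₁ t x) ^ 2) :
    ∀ x : ℝ, b x = bt x ∧ sigma x = sigmat x := by
  obtain ⟨x₁, hx₁⟩ := hωne
  have hdata₁ : SameCauchyData ε x₁ u₁ ut₁ := hu₁.sameCauchyData_of_eqOn_open hut₁ hω hobsE hx₁
  have hdata₂ : SameCauchyData ε x₁ u₂ ut₂ :=
    hu₂.sameCauchyData_of_eqOn_open hut₂ hω
      (fun t ht x hx => by
        linear_combination hobsV t ht x hx + (u₁ t x + ut₁ t x) * hobsE t ht x hx) hx₁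
  have hsq : deriv (fun x : ℝ => x ^ 2) = fun x => 2 * x := by ext x; simp
  exact drift_diffusion_uniqueness_from_expectation_and_variance_general hε.1 hε.2.le
    hb.oneSidedAnalytic hbt.oneSidedAnalytic hs.oneSidedAnalytic hst.oneSidedAnalytic hspos
    (fun x => (hstpos x).le) hu₁ hu₂ hut₁ hut₂ (fun x => by simp [hsq]) hdata₁ hdata₂
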